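/- Let Δ = ⟨F_1,…,F_r⟩ ∪ ⟨G_1,…,G_s⟩ be a Cohen-Macaulay simplicial forest, fix i ∈ [r] such that F_i ∩ G_j ≠ ∅ for some j, and let A ⊆ ⋂_{j : F_i∩G_j ≠ ∅} (F_i ∩ G_j). Then the contraction Δ_A is again a Cohen-Macaulay simplicial forest; in particular, R/I(Δ_A) is Cohen-Macaulay and Δ_A is a grafted simplicial forest. -/

import Mathlib

open MvPolynomial

/-- A simplicial complex on the vertex set `V`, presented by its set of facets
(the maximal faces).  Every facet is nonempty and no facet contains another. -/
structure SimplicialComplexOn (V : Type) [Fintype V] [DecidableEq V] : Type where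
  facets : Finset (Finset V)
  nonempty_facet : ∀ F ∈ facets, F.Nonempty
  antichain : ∀ F ∈ facets, ∀ G ∈ facets, F ⊆ G → F = G

variable {V : Type} [Fintype V] [DecidableEq V]

/-- `F` is a leaf of the collection of facets `S`: either `F` is the only facet, or
there is a facet `G ≠ F` (a joint) with `F ∩ H ⊆ F ∩ G` for every facet `H ≠ F`. -/
def IsLeafOf (S : Finset (Finset V)) (F : Finset V) : Prop :=
  F ∈ S ∧ ((∀ H ∈ S, H = F) ∨
    ∃ G ∈ S, G ≠ F ∧ ∀ H ∈ S, H ≠ F → F ∩ H ⊆ F ∩ G)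

/-- The forest property for a facet collection: every nonempty subcollection
(i.e. every nonempty subcomplex) has a leaf. -/
def HasLeafProp (S : Finset (Finset V)) : Prop :=
  ∀ T ⊆ S, T.Nonempty → ∃ F, IsLeafOf T F

/-- A good leaf: a facet which is a leaf of every subcomplex containing it. -/
def IsGoodLeafOf (S : Finset (Finset V)) (F : Finset V) : Prop :=
  F ∈ S ∧ ∀ T ⊆ S, F ∈ T → IsLeafOf T F

/-- A special leaf: a leaf `F` such that for all facets `H, H' ≠ F`,
`H ∩ H' ≠ ∅` iff `(H ∩ H') \ F ≠ ∅`. -/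
def IsSpecialLeafOf (S : Finset (Finset V)) (F : Finset V) : Prop :=
  IsLeafOf S F ∧ ∀ H ∈ S, ∀ H' ∈ S, H ≠ F → H' ≠ F →
    ((H ∩ H').Nonempty ↔ ((H ∩ H') \ F).Nonempty)

/-- A matching: a subcollection of the facets that is pairwise disjoint. -/
def IsMatchingOf (S : Finset (Finset V)) (M : Finset (Finset V)) : Prop :=
  M ⊆ S ∧ ∀ F ∈ M, ∀ G ∈ M, F ≠ G → F ∩ G = ∅

/-- The matching number: maximum size of a matching. -/
noncomputable def matchingNumberOf (S : Finset (Finset V)) : ℕ :=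
  sSup {n | ∃ M : Finset (Finset V), IsMatchingOf S M ∧ M.card = n}

/-- The facet collection `S` is grafted: it decomposes as `Fs ∪ Gs` where
(1) every vertex of a `G ∈ Gs` lies in some `F ∈ Fs`, (2) `Fs` is exactly the set
of leaves of `S`, (3) `Fs` and `Gs` are disjoint, (4) the members of `Fs` are
pairwise disjoint, and (5) for each `G ∈ Gs`, deleting the facet `G` leaves a
grafted collection. -/
inductive IsGrafted : Finset (Finset V) → Prop where
  | intro (S Fs Gs : Finset (Finset V))
      (hunion : S = Fs ∪ Gs)
      (hdisj : Disjoint Fs Gs)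
      (hcover : ∀ G ∈ Gs, ∀ v ∈ G, ∃ F ∈ Fs, v ∈ F)
      (hleaves : ∀ F, IsLeafOf S F ↔ F ∈ Fs)
      (hFdisj : ∀ F ∈ Fs, ∀ F' ∈ Fs, F ≠ F' → F ∩ F' = ∅)
      (hrec : ∀ G ∈ Gs, IsGrafted (S.erase G)) :
      IsGrafted S

/-- `S` is the (minimal presentation of the) grafting of the collection `Gs`
with the simplices `Fs`. -/
def IsGraftingDecomp (S Fs Gs : Finset (Finset V)) : Prop :=
  S = Fs ∪ Gs ∧ Disjoint Fs Gs ∧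
  (∀ G ∈ Gs, ∀ v ∈ G, ∃ F ∈ Fs, v ∈ F) ∧
  (∀ F, IsLeafOf S F ↔ F ∈ Fs) ∧
  (∀ F ∈ Fs, ∀ F' ∈ Fs, F ≠ F' → F ∩ F' = ∅) ∧
  (∀ G ∈ Gs, IsGrafted (S.erase G))

/-- A Cohen-Macaulay simplicial forest, combinatorially: a grafted simplicial forest. -/
def IsCMForestFacets (S : Finset (Finset V)) : Prop :=
  HasLeafProp S ∧ IsGrafted S

/-- The closed neighborhood `N[F] = {F} ∪ {G ∈ S : G ≠ F, G ∩ F ≠ ∅}`. -/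
def closedNbhd (S : Finset (Finset V)) (F : Finset V) : Finset (Finset V) :=
  insert F (S.filter fun G => G ≠ F ∧ (G ∩ F).Nonempty)

/-- The contraction of the facet collection `S` on `A`: the minimal members of
`{F \ A : F ∈ S}`. -/
def contraction (S : Finset (Finset V)) (A : Finset V) : Finset (Finset V) :=
  (S.image fun F => F \ A).filter fun F' => ∀ G ∈ S, G \ A ⊆ F' → G \ A = F'

variable (K : Type) [Field K]

/-- The square-free monomial `x_S = ∏_{v ∈ S} x_v`. -/
noncomputable def xMon (S : Finset V) : MvPolynomial V K := ∏ v ∈ S, X v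

/-- The facet ideal `I(Δ) = ⟨x_F : F a facet⟩`. -/
noncomputable def facetIdealOf (S : Finset (Finset V)) : Ideal (MvPolynomial V K) :=
  Ideal.span { p | ∃ F ∈ S, p = xMon K F }

/-- The `k`-th square-free power of an ideal: the ideal generated by all
square-free monomials lying in `I ^ k`. -/
noncomputable def sqfreePow (I : Ideal (MvPolynomial V K)) (k : ℕ) :
    Ideal (MvPolynomial V K) :=
  Ideal.span { p | (∃ S : Finset V, p = xMon K S) ∧ p ∈ I ^ k }

/-- The depth of `R/I` with respect to the homogeneous maximal ideal
`m = ⟨x_v : v ∈ V⟩`: the largest length of an `R/I`-regular sequence of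
elements of `m`. -/
noncomputable def gradedDepth (I : Ideal (MvPolynomial V K)) : ℕ :=
  sSup {n | ∃ rs : List (MvPolynomial V K), rs.length = n ∧
    (∀ r ∈ rs, r ∈ Ideal.span (Set.range (X : V → MvPolynomial V K))) ∧
    RingTheory.Sequence.IsRegular (MvPolynomial V K ⧸ I) rs}

/-- `R/I` is Cohen-Macaulay: its depth equals its Krull dimension. -/
def IsCMQuot (I : Ideal (MvPolynomial V K)) : Prop :=
  ((gradedDepth K I : ℕ∞) : WithBot ℕ∞) = ringKrullDim (MvPolynomial V K ⧸ I)

section Statements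

variable {V : Type} [Fintype V] [DecidableEq V] (K : Type) [Field K]

/-!
Let `m` be the number of vertices. A grafting is the same as a clutter whose vertices are
partitioned into blocks, the leaves `F ∈ Fs`, such that every leaf meets the facets in a chain:
a leaf has a free vertex, so it stays a leaf when non-leaves are deleted one by one, and comparing
two facets `G`, `G'` in the subclutter `{F, G, G'}` gives the chain condition. Conversely, blocks
meeting the facets in chains are leaves. This description is stable under contraction: the new
blocks are the minimal sets `H \ A` contained in some old block.

For Cohen-Macaulayness, the monomials of the `r` disjoint blocks form a regular sequence in the
facet ideal, so the quotient has dimension at most `m - r`. In each block, the sets of facets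
through the vertices form a chain; let the root be a vertex lying in the most facets. The
differences `X v - X (root v)` over the `m - r` non-roots, taken by decreasing number of facets
through `v`, form a regular sequence: modulo the earlier differences the facet ideal is again
monomial, `X v` occurs in its generators with exponent at most one, and each generator involving
`X v` has maximal exponent at the root of `v`.
-/

section ChainGrafting

variable {α : Type*} [DecidableEq α] {W : Type} [DecidableEq W]

namespace SimplicialComplexOn

theorem empty_notMem (Δ : SimplicialComplexOn V) : ∅ ∉ Δ.facets := fun h ↦
  Finset.not_nonempty_empty (Δ.nonempty_facet ∅ h)

theorem isAntichain (Δ : SimplicialComplexOn V) :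
    IsAntichain (· ⊆ ·) (Δ.facets : Set (Finset V)) :=
  fun F hF G hG hne hFG ↦ hne (Δ.antichain F hF G hG hFG)

end SimplicialComplexOn

theorem not_subset_of_subset_inter {S : Finset (Finset α)}
    (hS : IsAntichain (· ⊆ ·) (S : Set (Finset α))) {F G A : Finset α} (hF : F ∈ S) (hG : G ∈ S)
    (hFG : F ≠ G) (hA : A ⊆ F ∩ G) {H : Finset α} (hH : H ∈ S) : ¬ H ⊆ A := fun hHA ↦
  hFG <| (hS.eq hH hF (hHA.trans (hA.trans Finset.inter_subset_left))).symm.trans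
    (hS.eq hH hG (hHA.trans (hA.trans Finset.inter_subset_right)))

/-- A free vertex of the facet `F` of `S`: a vertex lying in no other facet. In an antichain the
nonempty leaves always have one, and having one survives the deletion of other facets. -/
def IsFreeVertexOf (S : Finset (Finset α)) (F : Finset α) (v : α) : Prop :=
  v ∈ F ∧ ∀ H ∈ S, v ∈ H → H = F

/-- A non-recursive description of graftings: `S` is a clutter whose vertex set is partitioned by
the members of `Fs ⊆ S`, and each `F ∈ Fs` meets the facets of `S` in a chain of subsets of `F`.
The chain condition is spelled as `F ∩ G ⊆ G'`, which is equivalent to `F ∩ G ⊆ F ∩ G'`. -/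
structure IsChainGrafting (S Fs : Finset (Finset α)) : Prop where
  subset : Fs ⊆ S
  empty_notMem : ∅ ∉ S
  isAntichain : IsAntichain (· ⊆ ·) (S : Set (Finset α))
  pairwiseDisjoint : (Fs : Set (Finset α)).PairwiseDisjoint id
  cover : ∀ H ∈ S, ∀ v ∈ H, ∃ F ∈ Fs, v ∈ F
  chain : ∀ F ∈ Fs, ∀ G ∈ S, ∀ G' ∈ S, F ∩ G ⊆ G' ∨ F ∩ G' ⊆ G

namespace IsLeafOf

variable {S : Finset (Finset W)} {F : Finset W}

theorem exists_isFreeVertexOf (hF : IsLeafOf S F) (hne : F.Nonempty)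
    (hS : IsAntichain (· ⊆ ·) (S : Set (Finset W))) : ∃ v, IsFreeVertexOf S F v := by
  obtain ⟨hFS, honly | ⟨G, hG, hGF, hjoint⟩⟩ := hF
  · obtain ⟨v, hv⟩ := hne
    exact ⟨v, hv, fun H hH _ ↦ honly H hH⟩
  · obtain ⟨v, hvF, hvG⟩ := Finset.not_subset.1 (hS hFS hG hGF.symm)
    refine ⟨v, hvF, fun H hH hvH ↦ ?_⟩
    by_contra hHF
    exact hvG (Finset.mem_of_mem_inter_right
      (hjoint H hH hHF (Finset.mem_inter_of_mem hvF hvH)))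

theorem image_sdiff (hF : IsLeafOf S F) {A : Finset W}
    (hinj : Set.InjOn (· \ A) (S : Set (Finset W))) :
    IsLeafOf (S.image (· \ A)) (F \ A) := by
  obtain ⟨hFS, honly | ⟨G, hG, hGF, hjoint⟩⟩ := hF
  · refine ⟨Finset.mem_image_of_mem _ hFS, .inl ?_⟩
    rw [Finset.forall_mem_image]
    exact fun H hH ↦ by rw [honly H hH]
  · refine ⟨Finset.mem_image_of_mem _ hFS, .inr ⟨G \ A, Finset.mem_image_of_mem _ hG,
      fun h ↦ hGF (hinj hG hFS h), ?_⟩⟩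
    rw [Finset.forall_mem_image]
    intro H hH hHF
    simp only [← Finset.inf_eq_inter, ← inf_sdiff]
    exact Finset.sdiff_subset_sdiff (hjoint H hH fun h ↦ hHF (by rw [h])) subset_rfl

end IsLeafOf

namespace IsGrafted

variable {S : Finset (Finset W)} {F : Finset W} {v : W}

theorem isLeafOf_of_isFreeVertexOf (h : IsGrafted S) (hF : F ∈ S) (hv : IsFreeVertexOf S F v) :
    IsLeafOf S F := by
  obtain ⟨_, Fs, Gs, rfl, hdisj, hcover, hleaves, -, -⟩ := h
  rw [hleaves]
  refine (Finset.mem_union.1 hF).resolve_right fun hFG ↦ ?_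
  obtain ⟨F', hF', hvF'⟩ := hcover F hFG v hv.1
  obtain rfl := hv.2 F' (Finset.mem_union_left _ hF') hvF'
  exact Finset.disjoint_left.1 hdisj hF' hFG

/- If `Gs` has a member besides `G` and `G'`, delete it and use the induction hypothesis: `F` keeps
its free vertex. Otherwise `G` and `G'` are the only facets that can meet `F`, one of them is a
joint of `F`, and its trace contains the other one. -/
theorem inter_subset_or_inter_subset (h : IsGrafted S) (hF : F ∈ S) (hv : IsFreeVertexOf S F v)
    {G G' : Finset W} (hG : G ∈ S) (hG' : G' ∈ S) : F ∩ G ⊆ G' ∨ F ∩ G' ⊆ G := by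
  induction h with
  | intro S Fs Gs hunion hdisj hcover hleaves hFdisj hrec ih =>
  have hleaf : IsLeafOf S F :=
    (IsGrafted.intro S Fs Gs hunion hdisj hcover hleaves hFdisj hrec).isLeafOf_of_isFreeVertexOf
      hF hv
  have hFFs : F ∈ Fs := (hleaves F).1 hleaf
  by_cases hex : ∃ B ∈ Gs, B ≠ G ∧ B ≠ G'
  · obtain ⟨B, hB, hBG, hBG'⟩ := hex
    have hFB : F ≠ B := fun h ↦ Finset.disjoint_left.1 hdisj hFFs (h ▸ hB)
    exact ih B hB (Finset.mem_erase.2 ⟨hFB, hF⟩)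
      ⟨hv.1, fun H hH ↦ hv.2 H (Finset.mem_of_mem_erase hH)⟩
      (Finset.mem_erase.2 ⟨hBG.symm, hG⟩) (Finset.mem_erase.2 ⟨hBG'.symm, hG'⟩)
  push Not at hex
  rcases eq_or_ne G F with rfl | hGF
  · exact .inr Finset.inter_subset_left
  rcases eq_or_ne G' F with rfl | hG'F
  · exact .inl Finset.inter_subset_left
  obtain ⟨-, honly | ⟨J, hJ, hJF, hjoint⟩⟩ := hleaf
  · exact absurd (honly G hG) hGF
  rcases Finset.mem_union.1 (hunion ▸ hJ) with hJFs | hJGs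
  · left
    have hFG := hjoint G hG hGF
    rw [hFdisj F hFFs J hJFs hJF.symm] at hFG
    exact hFG.trans (Finset.empty_subset _)
  · rcases eq_or_ne J G with rfl | hJG
    · exact .inr ((hjoint G' hG' hG'F).trans Finset.inter_subset_right)
    · obtain rfl := hex J hJGs hJG
      exact .inl ((hjoint G hG hGF).trans Finset.inter_subset_right)

theorem exists_isChainGrafting (h : IsGrafted S) (hne : ∅ ∉ S)
    (hS : IsAntichain (· ⊆ ·) (S : Set (Finset W))) : ∃ Fs, IsChainGrafting S Fs := by
  have hgrafted := h
  obtain ⟨_, Fs, Gs, hunion, hdisj, hcover, hleaves, hFdisj, hrec⟩ := h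
  refine ⟨Fs, hunion ▸ Finset.subset_union_left, hne, hS, ?_, fun H hH w hw ↦ ?_,
    fun F hF G hG G' hG' ↦ ?_⟩
  · exact fun F hF F' hF' hFF' ↦ Finset.disjoint_iff_inter_eq_empty.2 (hFdisj F hF F' hF' hFF')
  · rcases Finset.mem_union.1 (hunion ▸ hH) with hHF | hHG
    · exact ⟨H, hHF, hw⟩
    · exact hcover H hHG w hw
  · have hleaf := (hleaves F).2 hF
    have hF0 : F.Nonempty := Finset.nonempty_iff_ne_empty.2 fun h0 ↦ hne (h0 ▸ hleaf.1)
    obtain ⟨w, hw⟩ := hleaf.exists_isFreeVertexOf hF0 hS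
    exact hgrafted.inter_subset_or_inter_subset hleaf.1 hw hG hG'

end IsGrafted

namespace IsChainGrafting

variable {S Fs : Finset (Finset α)}

theorem mono (h : IsChainGrafting S Fs) {T : Finset (Finset α)} (hFT : Fs ⊆ T) (hTS : T ⊆ S) :
    IsChainGrafting T Fs where
  subset := hFT
  empty_notMem hT := h.empty_notMem (hTS hT)
  isAntichain := h.isAntichain.subset (Finset.coe_subset.2 hTS)
  pairwiseDisjoint := h.pairwiseDisjoint
  cover H hH := h.cover H (hTS hH)
  chain F hF G hG G' hG' := h.chain F hF G (hTS hG) G' (hTS hG')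

theorem nonempty (h : IsChainGrafting S Fs) {H : Finset α} (hH : H ∈ S) : H.Nonempty :=
  Finset.nonempty_iff_ne_empty.2 fun h0 ↦ h.empty_notMem (h0 ▸ hH)

theorem eq_of_mem (h : IsChainGrafting S Fs) {F F' : Finset α} (hF : F ∈ Fs) (hF' : F' ∈ Fs)
    {v : α} (hv : v ∈ F) (hv' : v ∈ F') : F = F' :=
  h.pairwiseDisjoint.elim_finset hF hF' v hv hv'

end IsChainGrafting

namespace IsChainGrafting

variable {S Fs : Finset (Finset W)} {F : Finset W}

theorem isLeafOf_of_mem (h : IsChainGrafting S Fs) (hF : F ∈ Fs) : IsLeafOf S F := by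
  refine ⟨h.subset hF, or_iff_not_imp_left.2 fun hother ↦ ?_⟩
  have hne : (S.erase F).Nonempty := by
    push Not at hother
    obtain ⟨B, hB, hBF⟩ := hother
    exact ⟨B, Finset.mem_erase.2 ⟨hBF, hB⟩⟩
  obtain ⟨J, hJ, hJmax⟩ := Finset.exists_max_image (S.erase F) (fun H ↦ (F ∩ H).card) hne
  obtain ⟨hJF, hJS⟩ := Finset.mem_erase.1 hJ
  refine ⟨J, hJS, hJF, fun H hH hHF ↦ ?_⟩
  rcases h.chain F hF H hH J hJS with hHJ | hJH
  · exact Finset.subset_inter Finset.inter_subset_left hHJ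
  · have hJH' : F ∩ J ⊆ F ∩ H := Finset.subset_inter Finset.inter_subset_left hJH
    exact (Finset.eq_of_subset_of_card_le hJH' (hJmax H (Finset.mem_erase.2 ⟨hHF, hH⟩))).ge

theorem isLeafOf_iff (h : IsChainGrafting S Fs) : IsLeafOf S F ↔ F ∈ Fs := by
  refine ⟨fun hF ↦ ?_, h.isLeafOf_of_mem⟩
  obtain ⟨v, hvF, hv⟩ := hF.exists_isFreeVertexOf (h.nonempty hF.1) h.isAntichain
  obtain ⟨F', hF', hvF'⟩ := h.cover F hF.1 v hvF
  rwa [← hv F' (h.subset hF') hvF']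

theorem isGrafted (h : IsChainGrafting S Fs) : IsGrafted S := by
  induction S using Finset.strongInduction with
  | H S ih =>
  refine .intro S Fs (S \ Fs) (Finset.union_sdiff_of_subset h.subset).symm Finset.disjoint_sdiff
    (fun G hG ↦ h.cover G (Finset.mem_sdiff.1 hG).1) (fun F ↦ h.isLeafOf_iff)
    (fun F hF F' hF' hne ↦ Finset.disjoint_iff_inter_eq_empty.1 (h.pairwiseDisjoint hF hF' hne))
    fun G hG ↦ ?_
  obtain ⟨hGS, hGF⟩ := Finset.mem_sdiff.1 hG
  exact ih _ (Finset.erase_ssubset hGS)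
    (h.mono (Finset.subset_erase.2 ⟨h.subset, hGF⟩) (Finset.erase_subset G S))

end IsChainGrafting

theorem IsGraftingDecomp.isGrafted {S Fs Gs : Finset (Finset W)} (h : IsGraftingDecomp S Fs Gs) :
    IsGrafted S := by
  obtain ⟨hunion, hdisj, hcover, hleaves, hFdisj, hrec⟩ := h
  exact .intro S Fs Gs hunion hdisj hcover hleaves hFdisj hrec

namespace HasLeafProp

variable {S : Finset (Finset W)}

theorem mono {T : Finset (Finset W)} (h : HasLeafProp S) (hT : T ⊆ S) :
    HasLeafProp T :=
  fun U hU ↦ h U (hU.trans hT)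

theorem image_sdiff (h : HasLeafProp S) (A : Finset W) : HasLeafProp (S.image (· \ A)) := by
  intro T hT hTne
  obtain ⟨U, hUS, hinj, rfl⟩ := Finset.exists_subset_injOn_image_eq_of_surjOn (S : Set (Finset W)) T
    fun H hH ↦ by simpa using hT hH
  obtain ⟨F, hF⟩ := h U (Finset.coe_subset.1 hUS) (Finset.image_nonempty.1 hTne)
  exact ⟨F \ A, hF.image_sdiff hinj⟩

end HasLeafProp

section Contraction

variable {S : Finset (Finset V)} {A : Finset V}

theorem mem_contraction_iff_minimal {H : Finset V} :
    H ∈ contraction S A ↔ Minimal (· ∈ S.image (· \ A)) H := by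
  rw [contraction, Finset.mem_filter, minimal_iff]
  refine and_congr_right fun _ ↦ ?_
  rw [Finset.forall_mem_image]
  exact forall₂_congr fun G _ ↦ imp_congr_right fun _ ↦ eq_comm

theorem isAntichain_contraction :
    IsAntichain (· ⊆ ·) (contraction S A : Set (Finset V)) := by
  have hset : (contraction S A : Set (Finset V)) = {H | Minimal (· ∈ S.image (· \ A)) H} :=
    Set.ext fun _ ↦ mem_contraction_iff_minimal
  rw [hset]
  exact setOfPred_minimal_antichain _

theorem contraction_subset_image : contraction S A ⊆ S.image (· \ A) :=
  Finset.filter_subset _ _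

theorem exists_mem_contraction_subset {F : Finset V} (hF : F ∈ S) :
    ∃ H ∈ contraction S A, H ⊆ F \ A := by
  obtain ⟨H, hHF, hH⟩ := (S.image (· \ A)).exists_le_minimal (Finset.mem_image_of_mem _ hF)
  exact ⟨H, mem_contraction_iff_minimal.2 hH, hHF⟩

theorem empty_notMem_contraction (hA : ∀ H ∈ S, ¬ H ⊆ A) : ∅ ∉ contraction S A := by
  intro h
  obtain ⟨H, hH, hHA⟩ := Finset.mem_image.1 (contraction_subset_image h)
  exact hA H hH (Finset.sdiff_eq_empty_iff_subset.1 hHA)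

theorem HasLeafProp.contraction (h : HasLeafProp S) : HasLeafProp (contraction S A) :=
  (h.image_sdiff A).mono contraction_subset_image

namespace IsChainGrafting

variable {Fs : Finset (Finset V)}

theorem contraction_chain (h : IsChainGrafting S Fs) {F G G' : Finset V} (hF : F ∈ Fs)
    (hG : G ∈ contraction S A) (hG' : G' ∈ contraction S A) : F ∩ G ⊆ G' ∨ F ∩ G' ⊆ G := by
  obtain ⟨B, hB, rfl⟩ := Finset.mem_image.1 (contraction_subset_image hG)
  obtain ⟨B', hB', rfl⟩ := Finset.mem_image.1 (contraction_subset_image hG')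
  simp only [← Finset.inter_sdiff_assoc]
  exact (h.chain F hF B hB B' hB').imp (Finset.sdiff_subset_sdiff · subset_rfl)
    (Finset.sdiff_subset_sdiff · subset_rfl)

theorem contraction_eq_of_subset (h : IsChainGrafting S Fs) {F G G' : Finset V} (hF : F ∈ Fs)
    (hG : G ∈ contraction S A) (hG' : G' ∈ contraction S A) (hGF : G ⊆ F) (hG'F : G' ⊆ F) :
    G = G' := by
  rcases h.contraction_chain hF hG hG' with hsub | hsub
  · exact isAntichain_contraction.eq hG hG' ((Finset.inter_eq_right.2 hGF).ge.trans hsub)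
  · exact isAntichain_contraction.eq' hG hG' ((Finset.inter_eq_right.2 hG'F).ge.trans hsub)

theorem contraction_cover (h : IsChainGrafting S Fs) {H : Finset V} (hH : H ∈ contraction S A)
    {v : V} (hv : v ∈ H) : ∃ F ∈ Fs, ∃ F' ∈ contraction S A, F' ⊆ F ∧ v ∈ F' := by
  obtain ⟨B, hB, rfl⟩ := Finset.mem_image.1 (contraction_subset_image hH)
  obtain ⟨F, hF, hvF⟩ := h.cover B hB v (Finset.mem_sdiff.1 hv).1
  obtain ⟨F', hF', hF'A⟩ := exists_mem_contraction_subset (A := A) (h.subset hF)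
  have hF'F : F' ⊆ F := hF'A.trans Finset.sdiff_subset
  refine ⟨F, hF, F', hF', hF'F, ?_⟩
  rcases h.contraction_chain hF hF' hH with hsub | hsub
  · rwa [isAntichain_contraction.eq hF' hH ((Finset.inter_eq_right.2 hF'F).ge.trans hsub)]
  · exact hsub (Finset.mem_inter_of_mem hvF hv)

theorem contraction (h : IsChainGrafting S Fs) (hA : ∀ H ∈ S, ¬ H ⊆ A) :
    IsChainGrafting (contraction S A) {H ∈ contraction S A | ∃ F ∈ Fs, H ⊆ F} where
  subset := Finset.filter_subset _ _
  empty_notMem := empty_notMem_contraction hA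
  isAntichain := isAntichain_contraction
  pairwiseDisjoint := by
    intro H hH H' hH' hne
    obtain ⟨hH, F, hF, hHF⟩ := Finset.mem_filter.1 hH
    obtain ⟨hH', F', hF', hHF'⟩ := Finset.mem_filter.1 hH'
    refine (h.pairwiseDisjoint hF hF' ?_).mono hHF hHF'
    rintro rfl
    exact hne (h.contraction_eq_of_subset hF hH hH' hHF hHF')
  cover H hH v hv := by
    obtain ⟨F, hF, F', hF', hsub, hvF'⟩ := h.contraction_cover hH hv
    exact ⟨F', Finset.mem_filter.2 ⟨hF', F, hF, hsub⟩, hvF'⟩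
  chain F' hF' G hG G' hG' := by
    obtain ⟨-, F, hF, hF'F⟩ := Finset.mem_filter.1 hF'
    exact (h.contraction_chain hF hG hG').imp
      (Finset.inter_subset_inter_right hF'F).trans (Finset.inter_subset_inter_right hF'F).trans

end IsChainGrafting

end Contraction

/-- The number of facets of `S` containing the vertex `v`. Within a block of a chain grafting it
orders the vertices by inclusion of the sets of facets containing them. -/
def facetDegree (S : Finset (Finset α)) (v : α) : ℕ :=
  (S.filter (v ∈ ·)).card

namespace IsChainGrafting

variable {S Fs : Finset (Finset α)}

theorem mem_of_facetDegree_le (h : IsChainGrafting S Fs) {F : Finset α} (hF : F ∈ Fs) {v v' : α}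
    (hv : v ∈ F) (hv' : v' ∈ F) (hle : facetDegree S v ≤ facetDegree S v') {H : Finset α}
    (hH : H ∈ S) (hvH : v ∈ H) : v' ∈ H := by
  by_contra hv'H
  have hsub : S.filter (v' ∈ ·) ⊆ S.filter (v ∈ ·) := fun H' hH' ↦ by
    obtain ⟨hH'S, hv'H'⟩ := Finset.mem_filter.1 hH'
    refine Finset.mem_filter.2 ⟨hH'S, ?_⟩
    rcases h.chain F hF H hH H' hH'S with hHH' | hH'H
    · exact hHH' (Finset.mem_inter_of_mem hv hvH)
    · exact absurd (hH'H (Finset.mem_inter_of_mem hv' hv'H')) hv'H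
  have heq := Finset.eq_of_subset_of_card_le hsub hle
  exact hv'H (Finset.filter_inj'.1 heq hH |>.2 hvH)

theorem exists_blockMap (h : IsChainGrafting S Fs) (hFs : Fs.Nonempty) :
    ∃ β : α → Finset α, (∀ v, β v ∈ Fs) ∧ ∀ F ∈ Fs, ∀ v ∈ F, β v = F := by
  have hβ (v : α) : ∃ B ∈ Fs, ∀ F ∈ Fs, v ∈ F → B = F := by
    by_cases hv : ∃ F ∈ Fs, v ∈ F
    · obtain ⟨F, hF, hvF⟩ := hv
      exact ⟨F, hF, fun F' hF' ↦ h.eq_of_mem hF hF' hvF⟩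
    · obtain ⟨F, hF⟩ := hFs
      exact ⟨F, hF, fun F' hF' hvF' ↦ absurd ⟨F', hF', hvF'⟩ hv⟩
  choose β hβFs hβ using hβ
  exact ⟨β, hβFs, fun F hF v ↦ hβ v F hF⟩

/- Each block is collapsed onto a vertex of maximal degree; a vertex in no facet is sent to any
such vertex. -/
theorem exists_root [Fintype α] (h : IsChainGrafting S Fs) (hFs : Fs.Nonempty) :
    ∃ root : α → α, (∀ v, root (root v) = root v) ∧ (∀ H ∈ S, ∀ v ∈ H, root v ∈ H) ∧
      (Finset.univ.filter fun v ↦ root v = v).card = Fs.card ∧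
      ∀ v v', root v' = root v → facetDegree S v ≤ facetDegree S v' →
        ∀ H ∈ S, v ∈ H → v' ∈ H := by
  obtain ⟨β, hβFs, hβ⟩ := h.exists_blockMap hFs
  have hmemβ {H : Finset α} (hH : H ∈ S) {v : α} (hv : v ∈ H) : v ∈ β v := by
    obtain ⟨F, hF, hvF⟩ := h.cover H hH v hv
    exact hβ F hF v hvF ▸ hvF
  have htop (F : Fs) : ∃ t ∈ F.1, ∀ v ∈ F.1, facetDegree S v ≤ facetDegree S t :=
    Finset.exists_max_image _ _ (h.nonempty (h.subset F.2))
  choose top htopF hmax using htop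
  have hβtop (F : Fs) : β (top F) = F := hβ F F.2 _ (htopF F)
  have hinj : Function.Injective top :=
    Function.HasLeftInverse.injective ⟨fun v ↦ ⟨β v, hβFs v⟩, fun F ↦ Subtype.ext (hβtop F)⟩
  have hroot (F : Fs) : top ⟨β (top F), hβFs _⟩ = top F := congrArg top (Subtype.ext (hβtop F))
  refine ⟨fun v ↦ top ⟨β v, hβFs v⟩, fun v ↦ hroot _, fun H hH v hv ↦ ?_, ?_,
    fun v v' heq hle H hH hvH ↦ ?_⟩
  · exact h.mem_of_facetDegree_le (hβFs v) (hmemβ hH hv) (htopF ⟨β v, hβFs v⟩)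
      (hmax ⟨β v, hβFs v⟩ v (hmemβ hH hv)) hH hv
  · have hfixed : Finset.univ.filter (fun v ↦ top ⟨β v, hβFs v⟩ = v) = Finset.univ.image top := by
      ext v
      simp only [Finset.mem_filter_univ, Finset.mem_image, Finset.mem_univ, true_and]
      exact ⟨fun hv ↦ ⟨_, hv⟩, by rintro ⟨F, rfl⟩; exact hroot F⟩
    rw [hfixed, Finset.card_image_of_injective _ hinj, Finset.card_univ, Fintype.card_coe]
  · have hpos : 0 < facetDegree S v' :=
      (Finset.card_pos.2 ⟨H, Finset.mem_filter.2 ⟨hH, hvH⟩⟩).trans_le hle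
    obtain ⟨H', hH'⟩ := Finset.card_pos.1 hpos
    obtain ⟨hH'S, hv'H'⟩ := Finset.mem_filter.1 hH'
    have hββ : β v' = β v := congrArg Subtype.val (hinj heq)
    exact h.mem_of_facetDegree_le (hβFs v) (hmemβ hH hvH) (hββ ▸ hmemβ hH'S hv'H') hle hH hvH

end IsChainGrafting

end ChainGrafting

section RegularSequence

open Ideal RingTheory.Sequence

variable {R : Type*} [CommRing R]

theorem mk_mem_smul_top_iff {I J : Ideal R} {f : R} :
    Submodule.Quotient.mk f ∈ (J • ⊤ : Submodule R (R ⧸ I)) ↔ f ∈ I ⊔ J := by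
  rw [Ideal.smul_top_eq_map, Submodule.restrictScalars_mem, sup_comm]
  exact Ideal.mem_quotient_iff_mem_sup

theorem isWeaklyRegular_quotient_iff {I : Ideal R} {rs : List R} :
    IsWeaklyRegular (R ⧸ I) rs ↔ ∀ (i : ℕ) (hi : i < rs.length) (f : R),
      f * rs[i] ∈ I ⊔ ofList (rs.take i) → f ∈ I ⊔ ofList (rs.take i) := by
  rw [isWeaklyRegular_iff]
  refine forall₂_congr fun i hi ↦ ?_
  rw [isSMulRegular_quotient_iff_mem_of_smul_mem, (Submodule.Quotient.mk_surjective I).forall]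
  refine forall_congr' fun f ↦ ?_
  rw [← Submodule.Quotient.mk_smul, mk_mem_smul_top_iff, mk_mem_smul_top_iff,
    smul_eq_mul, mul_comm]

theorem isRegular_quotient_of_isWeaklyRegular {I J : Ideal R} {rs : List R}
    (h : IsWeaklyRegular (R ⧸ I) rs) (hJ : J ≠ ⊤) (hIJ : I ≤ J) (hrs : ∀ r ∈ rs, r ∈ J) :
    IsRegular (R ⧸ I) rs := by
  refine ⟨h, fun htop ↦ hJ ?_⟩
  have hone : (Submodule.Quotient.mk 1 : R ⧸ I) ∈ (ofList rs • ⊤ : Submodule R (R ⧸ I)) :=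
    htop ▸ Submodule.mem_top
  rw [mk_mem_smul_top_iff] at hone
  exact (eq_top_iff_one J).2 (sup_le hIJ (span_le.2 hrs) hone)

theorem ofList_map_eq_span_image {ι : Type*} [DecidableEq ι] (f : ι → R) (L : List ι) :
    ofList (L.map f) = span (f '' (L.toFinset : Set ι)) :=
  congrArg span (Set.ext fun x ↦ by simp)

variable {M : Type*} [AddCommGroup M] [Module R M] [Module.Finite R M] {rs : List R}

theorem supportDim_add_length_le_of_isWeaklyRegular (h : IsWeaklyRegular M rs) :
    Module.supportDim R (M ⧸ ofList rs • (⊤ : Submodule R M)) + rs.length ≤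
      Module.supportDim R M := by
  induction rs generalizing M with
  | nil =>
    rw [ofList_nil, Submodule.bot_smul]
    simpa using (Module.supportDim_eq_of_equiv (Submodule.quotEquivOfEqBot ⊥ rfl)).le
  | cons r rs ih =>
    obtain ⟨hr, hrs⟩ := (isWeaklyRegular_cons_iff M r rs).1 h
    calc _ = Module.supportDim R (QuotSMulTop r M ⧸ ofList rs • (⊤ : Submodule R _))
          + rs.length + 1 := by
            rw [Module.supportDim_eq_of_equiv
              (Submodule.quotOfListConsSMulTopEquivQuotSMulTopInner M r _), List.length_cons,
              Nat.cast_add_one, add_assoc]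
      _ ≤ Module.supportDim R (QuotSMulTop r M) + 1 := by gcongr; exact ih hrs
      _ ≤ Module.supportDim R M := Module.supportDim_quotSMulTop_succ_le_of_notMem_minimalPrimes
            fun _ ↦ hr.notMem_of_mem_minimalPrimes

theorem length_le_supportDim_of_isRegular (h : IsRegular M rs) :
    rs.length ≤ Module.supportDim R M := by
  have := h.quot_ofList_smul_nontrivial ⊤
  have hnonneg : 0 ≤ Module.supportDim R (M ⧸ ofList rs • (⊤ : Submodule R M)) :=
    Order.krullDim_nonneg_iff.2 (Module.nonempty_support_of_nontrivial.to_subtype)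
  exact (le_add_of_nonneg_left hnonneg).trans
    (supportDim_add_length_le_of_isWeaklyRegular h.toIsWeaklyRegular)

end RegularSequence

section RetractMembership

variable {R : Type*} [CommRing R]

theorem mem_sup_iff_map_mem_map {φ : R →+* R} {I J : Ideal R} (hJ : J ≤ RingHom.ker φ)
    (hφ : ∀ x, x - φ x ∈ J) {f : R} : f ∈ I ⊔ J ↔ φ f ∈ I.map φ := by
  constructor
  · intro hf
    have := Ideal.mem_map_of_mem φ hf
    rwa [Ideal.map_sup, (Ideal.map_eq_bot_iff_le_ker φ).2 hJ, sup_bot_eq] at this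
  · intro hf
    have hle : I.map φ ≤ I ⊔ J := Ideal.map_le_iff_le_comap.2 fun x hx ↦ by
      rw [Ideal.mem_comap, ← sub_sub_cancel x (φ x)]
      exact sub_mem (Ideal.mem_sup_left hx) (Ideal.mem_sup_right (hφ x))
    rw [← sub_add_cancel f (φ f)]
    exact add_mem (Ideal.mem_sup_right (hφ f)) (hle hf)

end RetractMembership

section MonomialIdeal

open Finsupp

variable {σ R : Type*} [CommRing R] {D : Set (σ →₀ ℕ)} {f : MvPolynomial σ R}

theorem mem_span_of_mul_monomial_mem_span {e : σ →₀ ℕ}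
    (he : ∀ d ∈ D, Disjoint d.support e.support)
    (hf : f * monomial e 1 ∈ Ideal.span ((monomial · (1 : R)) '' D)) :
    f ∈ Ideal.span ((monomial · (1 : R)) '' D) := by
  rw [mem_ideal_span_monomial_image] at hf ⊢
  intro m hm
  obtain ⟨d, hd, hdm⟩ := hf (m + e) (by simpa [coeff_mul_monomial] using hm)
  refine ⟨d, hd, fun v ↦ ?_⟩
  by_cases hv : v ∈ d.support
  · simpa [notMem_support_iff.1 (Finset.disjoint_left.1 (he d hd) hv)] using hdm v
  · simp [notMem_support_iff.1 hv]

theorem le_of_le_add_single {d m : σ →₀ ℕ} {u : σ} (hdm : d ≤ m + single u 1)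
    (hu : d u ≤ m u) : d ≤ m := by
  classical
  intro v
  rcases eq_or_ne v u with rfl | hv
  · exact hu
  · simpa [single_apply, hv.symm] using hdm v

theorem add_single_mem_support_mul_X_sub_X {m : σ →₀ ℕ} {u w : σ} (hm : m ∈ f.support)
    (h : ∀ m' ∈ f.support, m' + single w 1 ≠ m + single u 1) :
    m + single u 1 ∈ (f * (X u - X w)).support := by
  have hw : coeff (m + single u 1) (f * X w) = 0 := by
    rw [← MvPolynomial.notMem_support_iff, support_mul_X, Finset.mem_map]
    rintro ⟨m', hm', heq⟩
    exact h m' hm' heq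
  rw [MvPolynomial.mem_support_iff, mul_sub, coeff_sub, coeff_mul_X, hw, sub_zero]
  exact MvPolynomial.mem_support_iff.1 hm

/- Among the monomials of `f` outside the ideal, let `m` have maximal degree in `u`. Then `m * X u`
cannot cancel modulo the ideal, so some `d ∈ D` has `d ≤ m + single u 1` and `d u = 1`, `m u = 0`.
Hence `m * X w` cannot cancel either, and the generator dividing it already divides `m`. -/
theorem mem_span_of_mul_X_sub_X_mem_span {u w : σ} (huw : u ≠ w) (hu : ∀ d ∈ D, d u ≤ 1)
    (hw : ∀ d ∈ D, d u ≠ 0 → ∀ d' ∈ D, d' w ≤ d w)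
    (hf : f * (X u - X w) ∈ Ideal.span ((monomial · (1 : R)) '' D)) :
    f ∈ Ideal.span ((monomial · (1 : R)) '' D) := by
  classical
  rw [mem_ideal_span_monomial_image] at hf ⊢
  by_contra! hbad
  have hne : {m ∈ f.support | ∀ d ∈ D, ¬ d ≤ m}.Nonempty := by
    simpa [Finset.Nonempty] using hbad
  obtain ⟨m, hm, hmax⟩ := Finset.exists_max_image _ (fun m ↦ m u) hne
  obtain ⟨hmf, hmD⟩ := Finset.mem_filter.1 hm
  obtain ⟨d, hd, hdm⟩ : ∃ d ∈ D, d ≤ m + single u 1 := by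
    by_contra! hno
    have hmu : m + single u 1 ∉ (f * (X u - X w)).support := fun h ↦ by
      obtain ⟨d, hd, hdm⟩ := hf _ h
      exact hno d hd hdm
    refine hmu (add_single_mem_support_mul_X_sub_X hmf fun m' hm' heq ↦ ?_)
    have hm'le : m' u ≤ m u := hmax m' (Finset.mem_filter.2
      ⟨hm', fun d hd hdm' ↦ hno d hd (heq ▸ hdm'.trans le_self_add)⟩)
    have hm'u : m' u = m u + 1 := by simpa [huw.symm] using DFunLike.congr_fun heq u
    lia
  have hlt : m u < d u := lt_of_not_ge fun h ↦ hmD d hd (le_of_le_add_single hdm h)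
  have hdu := hu d hd
  have hdw : d w ≤ m w := by simpa [single_apply, huw] using hdm w
  obtain ⟨d', hd', hdm'⟩ : ∃ d' ∈ D, d' ≤ m + single w 1 := by
    refine hf _ ?_
    rw [← support_neg, ← mul_neg, neg_sub]
    refine add_single_mem_support_mul_X_sub_X hmf fun m' _ heq ↦ ?_
    have hm'u : m' u + 1 = m u := by simpa [huw.symm] using DFunLike.congr_fun heq u
    lia
  exact hmD d' hd' (le_of_le_add_single hdm' ((hw d hd (by lia) d' hd').trans hdw))

end MonomialIdeal

section IdealOfVars

variable {σ R : Type*} [CommRing R]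

theorem X_mem_idealOfVars (v : σ) : (X v : MvPolynomial σ R) ∈ idealOfVars σ R :=
  Ideal.subset_span ⟨v, rfl⟩

variable (σ R) in
theorem idealOfVars_ne_top [Nontrivial R] : idealOfVars σ R ≠ ⊤ := by
  have hle : idealOfVars σ R ≤ RingHom.ker (constantCoeff (σ := σ) (R := R)) :=
    Ideal.span_le.2 (by
      rintro _ ⟨v, rfl⟩
      exact constantCoeff_X R v)
  exact fun htop ↦ RingHom.ker_ne_top constantCoeff (top_le_iff.1 (htop ▸ hle))

end IdealOfVars

section Rename

variable {σ R : Type*} [CommRing R] {root : σ → σ}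

theorem mem_sup_span_X_sub_X_iff [DecidableEq σ] (hroot : ∀ v, root (root v) = root v)
    {I : Ideal (MvPolynomial σ R)} {P : Finset σ} {f : MvPolynomial σ R} :
    f ∈ I ⊔ Ideal.span ((fun v ↦ X v - X (root v)) '' (P : Set σ)) ↔
      rename (P.piecewise root id) f ∈ I.map (rename (P.piecewise root id)) := by
  refine mem_sup_iff_map_mem_map (φ := (rename (P.piecewise root id) : _ →ₐ[R] _).toRingHom)
    (Ideal.span_le.2 ?_) fun p ↦ ?_
  · rintro _ ⟨v, hv, rfl⟩
    have hfix : P.piecewise root id (root v) = root v := by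
      by_cases h : root v ∈ P <;> simp [h, hroot]
    simp [RingHom.mem_ker, Finset.piecewise_eq_of_mem _ _ _ hv, hfix]
  · set J := Ideal.span ((fun v ↦ (X v - X (root v) : MvPolynomial σ R)) '' (P : Set σ))
    have hcongr : (Ideal.Quotient.mkₐ R J).comp (rename (P.piecewise root id)) =
        Ideal.Quotient.mkₐ R J := by
      refine MvPolynomial.algHom_ext fun v ↦ ?_
      by_cases hv : v ∈ P
      · have hmem : (X v - X (root v) : MvPolynomial σ R) ∈ J :=
          Ideal.subset_span (Set.mem_image_of_mem _ hv)
        simpa [hv] using (Ideal.Quotient.eq.2 hmem).symm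
      · simp [hv]
    exact Ideal.Quotient.eq.1 (DFunLike.congr_fun hcongr p).symm

end Rename

/-- The exponent of the monomial obtained from `∏ v ∈ H, X v` by the substitution `v ↦ ρ v`. -/
noncomputable def exponent {σ τ : Type*} (ρ : σ → τ) (H : Finset σ) : τ →₀ ℕ :=
  ∑ v ∈ H, Finsupp.single (ρ v) 1

theorem exponent_apply {σ τ : Type*} [DecidableEq τ] (ρ : σ → τ) (H : Finset σ) (w : τ) :
    exponent ρ H w = (H.filter (ρ · = w)).card := by
  simp [exponent, Finsupp.single_apply]

theorem support_exponent_id {σ : Type*} (H : Finset σ) : (exponent id H).support = H := by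
  classical
  ext v
  simp [exponent_apply]

section FacetIdeal

variable {W : Type}

theorem rename_xMon (ρ : W → W) (H : Finset W) :
    rename ρ (xMon K H) = monomial (exponent ρ H) 1 := by
  rw [xMon, map_prod, exponent, monomial_sum_one]
  exact Finset.prod_congr rfl fun v _ ↦ rename_X ρ v

theorem facetIdealOf_eq_span_image (S : Finset (Finset W)) :
    facetIdealOf K S = Ideal.span (xMon K '' S) :=
  congrArg Ideal.span (Set.ext fun p ↦ by simp [eq_comm])

theorem map_rename_facetIdealOf (ρ : W → W) (S : Finset (Finset W)) :
    (facetIdealOf K S).map (rename ρ) =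
      Ideal.span ((monomial · (1 : K)) '' (exponent ρ '' S)) := by
  rw [facetIdealOf_eq_span_image, Ideal.map_span, Set.image_image, Set.image_image]
  simp only [rename_xMon]

theorem facetIdealOf_eq_span_monomial (S : Finset (Finset W)) :
    facetIdealOf K S = Ideal.span ((monomial · (1 : K)) '' (exponent id '' S)) := by
  rw [← map_rename_facetIdealOf, rename_id]
  exact (Ideal.map_id _).symm

theorem ofList_map_xMon [DecidableEq W] (L : List (Finset W)) :
    Ideal.ofList (L.map (xMon K)) = facetIdealOf K L.toFinset := by
  rw [facetIdealOf_eq_span_image, ofList_map_eq_span_image]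

theorem isWeaklyRegular_map_xMon {L : List (Finset W)} (hL : L.Pairwise Disjoint) :
    RingTheory.Sequence.IsWeaklyRegular (MvPolynomial W K) (L.map (xMon K)) := by
  classical
  rw [RingTheory.Sequence.isWeaklyRegular_iff]
  intro i hi
  rw [isSMulRegular_quotient_iff_mem_of_smul_mem, smul_eq_mul, Ideal.mul_top, ← List.map_take,
    ofList_map_xMon, facetIdealOf_eq_span_monomial]
  intro f hf
  rw [List.getElem_map, smul_eq_mul, mul_comm, ← rename_id_apply (xMon K _), rename_xMon] at hf
  refine mem_span_of_mul_monomial_mem_span ?_ hf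
  rintro _ ⟨H, hH, rfl⟩
  rw [support_exponent_id, support_exponent_id]
  obtain ⟨j, hj, rfl⟩ := List.mem_take_iff_getElem.1 (List.mem_toFinset.1 hH)
  exact List.pairwise_iff_getElem.1 hL j i _ _ (lt_min_iff.1 hj).1

theorem facetIdealOf_le_idealOfVars {S : Finset (Finset W)} (hS : ∅ ∉ S) :
    facetIdealOf K S ≤ idealOfVars W K := by
  rw [facetIdealOf_eq_span_image, Ideal.span_le]
  rintro _ ⟨H, hH, rfl⟩
  obtain ⟨v, hv⟩ := Finset.nonempty_iff_ne_empty.2 (ne_of_mem_of_not_mem hH hS)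
  exact Ideal.mem_of_dvd _ (Finset.dvd_prod_of_mem _ hv) (X_mem_idealOfVars v)

end FacetIdeal

section CohenMacaulay

variable {W : Type}

theorem isCMQuot_of_isRegular {I : Ideal (MvPolynomial W K)} {rs : List (MvPolynomial W K)}
    (hmem : ∀ r ∈ rs, r ∈ idealOfVars W K)
    (hreg : RingTheory.Sequence.IsRegular (MvPolynomial W K ⧸ I) rs)
    (hdim : ringKrullDim (MvPolynomial W K ⧸ I) ≤ rs.length) : IsCMQuot K I := by
  have hle {rs' : List (MvPolynomial W K)}
      (h : RingTheory.Sequence.IsRegular (MvPolynomial W K ⧸ I) rs') :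
      (rs'.length : WithBot ℕ∞) ≤ ringKrullDim (MvPolynomial W K ⧸ I) := by
    rw [← Module.supportDim_quotient_eq_ringKrullDim]
    exact length_le_supportDim_of_isRegular h
  have hdepth : gradedDepth K I = rs.length := by
    refine IsGreatest.csSup_eq ⟨⟨rs, rfl, hmem, hreg⟩, ?_⟩
    rintro _ ⟨rs', rfl, -, hreg'⟩
    exact_mod_cast (hle hreg').trans hdim
  rw [IsCMQuot, hdepth]
  exact le_antisymm (hle hreg) hdim

theorem ringKrullDim_quotient_facetIdealOf_add_card_le [Fintype W]
    {S Fs : Finset (Finset W)} (hFs : Fs ⊆ S)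
    (hdisj : (Fs : Set (Finset W)).PairwiseDisjoint id) :
    ringKrullDim (MvPolynomial W K ⧸ facetIdealOf K S) + Fs.card ≤ Fintype.card W := by
  classical
  have hpair : Fs.toList.Pairwise Disjoint :=
    List.pairwise_of_coe_toFinset_pairwise (by rwa [Finset.toList_toFinset])
      Fs.nodup_toList
  have hle : facetIdealOf K Fs ≤ facetIdealOf K S := by
    simp only [facetIdealOf_eq_span_image]
    exact Ideal.span_mono (Set.image_mono (Finset.coe_subset.2 hFs))
  calc ringKrullDim (MvPolynomial W K ⧸ facetIdealOf K S) + Fs.card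
      ≤ ringKrullDim (MvPolynomial W K ⧸ facetIdealOf K Fs) + Fs.card := by
        gcongr
        exact ringKrullDim_le_of_surjective _ (Ideal.Quotient.factor_surjective hle)
    _ = Module.supportDim (MvPolynomial W K) (MvPolynomial W K ⧸
          Ideal.ofList (Fs.toList.map (xMon K)) • (⊤ : Ideal (MvPolynomial W K))) +
          (Fs.toList.map (xMon K)).length := by
        rw [ofList_map_xMon, Finset.toList_toFinset, smul_eq_mul, Ideal.mul_top,
          Module.supportDim_quotient_eq_ringKrullDim, List.length_map, Finset.length_toList]
    _ ≤ Module.supportDim (MvPolynomial W K) (MvPolynomial W K) :=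
        supportDim_add_length_le_of_isWeaklyRegular (isWeaklyRegular_map_xMon K hpair)
    _ = Fintype.card W := by
        rw [Module.supportDim_self_eq_ringKrullDim, MvPolynomial.ringKrullDim_of_isNoetherianRing,
          ringKrullDim_eq_zero_of_field, zero_add, Nat.card_eq_fintype_card]

end CohenMacaulay

section RegularSequence

variable {W : Type} {root : W → W} {S : Finset (Finset W)}

theorem mem_sup_of_mul_X_sub_X_mem_sup (hroot : ∀ v, root (root v) = root v)
    (hmem : ∀ H ∈ S, ∀ v ∈ H, root v ∈ H) {P : Finset W} {u : W} (huP : u ∉ P)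
    (hu : root u ≠ u) (hP : ∀ v ∈ P, root v = root u → ∀ H ∈ S, u ∈ H → v ∈ H)
    {f : MvPolynomial W K}
    (hf : f * (X u - X (root u)) ∈
      facetIdealOf K S ⊔ Ideal.span ((fun v ↦ X v - X (root v)) '' (P : Set W))) :
    f ∈ facetIdealOf K S ⊔ Ideal.span ((fun v ↦ X v - X (root v)) '' (P : Set W)) := by
  classical
  rw [mem_sup_span_X_sub_X_iff hroot, map_rename_facetIdealOf] at hf ⊢
  set ρ := P.piecewise root id
  have hρ_mem {v : W} (hv : v ∈ P) : ρ v = root v := Finset.piecewise_eq_of_mem _ _ _ hv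
  have hρ_notMem {v : W} (hv : v ∉ P) : ρ v = v := Finset.piecewise_eq_of_notMem _ _ _ hv
  have hρroot : ρ (root u) = root u := by
    by_cases h : root u ∈ P
    · rw [hρ_mem h, hroot]
    · exact hρ_notMem h
  have hρ_eq_u {v : W} (h : ρ v = u) : v = u := by
    by_cases hv : v ∈ P
    · exact absurd (by rw [← h, hρ_mem hv, hroot]) hu
    · rwa [hρ_notMem hv] at h
  rw [map_mul, map_sub, rename_X, rename_X, hρ_notMem huP, hρroot] at hf
  refine mem_span_of_mul_X_sub_X_mem_span hu.symm ?_ ?_ hf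
  · rintro _ ⟨H, -, rfl⟩
    rw [exponent_apply, Finset.card_le_one]
    simp only [Finset.mem_filter]
    exact fun v hv v' hv' ↦ (hρ_eq_u hv.2).trans (hρ_eq_u hv'.2).symm
  · rintro _ ⟨H, hH, rfl⟩ hne _ ⟨H', -, rfl⟩
    have huH : u ∈ H := by
      rw [exponent_apply, Finset.card_ne_zero] at hne
      obtain ⟨v, hv⟩ := hne
      rw [Finset.mem_filter] at hv
      exact hρ_eq_u hv.2 ▸ hv.1
    rw [exponent_apply, exponent_apply]
    refine Finset.card_le_card fun v hv ↦ ?_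
    have hρv : ρ v = root u := (Finset.mem_filter.1 hv).2
    refine Finset.mem_filter.2 ⟨?_, hρv⟩
    by_cases hvP : v ∈ P
    · exact hP v hvP ((hρ_mem hvP).symm.trans hρv) H hH huH
    · exact (hρ_notMem hvP).symm.trans hρv ▸ hmem H hH u huH

theorem isWeaklyRegular_map_X_sub_X (hroot : ∀ v, root (root v) = root v)
    (hmem : ∀ H ∈ S, ∀ v ∈ H, root v ∈ H) {L : List W} (hL : L.Nodup)
    (hfix : ∀ v ∈ L, root v ≠ v)
    (hpair : L.Pairwise fun v' v ↦ root v' = root v → ∀ H ∈ S, v ∈ H → v' ∈ H) :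
    RingTheory.Sequence.IsWeaklyRegular (MvPolynomial W K ⧸ facetIdealOf K S)
      (L.map fun v ↦ (X v - X (root v) : MvPolynomial W K)) := by
  classical
  rw [isWeaklyRegular_quotient_iff]
  intro i hi f hf
  rw [List.length_map] at hi
  rw [← List.map_take, ofList_map_eq_span_image] at hf ⊢
  rw [List.getElem_map] at hf
  refine mem_sup_of_mul_X_sub_X_mem_sup K hroot hmem (fun h ↦ ?_) (hfix _ (L.getElem_mem hi))
    (fun v hv ↦ ?_) hf
  · obtain ⟨j, hj, heq⟩ := List.mem_take_iff_getElem.1 (List.mem_toFinset.1 h)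
    exact (lt_min_iff.1 hj).1.ne ((hL.getElem_inj_iff).1 heq)
  · obtain ⟨j, hj, rfl⟩ := List.mem_take_iff_getElem.1 (List.mem_toFinset.1 hv)
    exact List.pairwise_iff_getElem.1 hpair j i _ _ (lt_min_iff.1 hj).1

end RegularSequence

namespace IsChainGrafting

variable {S Fs : Finset (Finset V)}

theorem exists_isWeaklyRegular (h : IsChainGrafting S Fs) :
    ∃ rs : List (MvPolynomial V K), rs.length + Fs.card = Fintype.card V ∧
      (∀ r ∈ rs, r ∈ idealOfVars V K) ∧
      RingTheory.Sequence.IsWeaklyRegular (MvPolynomial V K ⧸ facetIdealOf K S) rs := by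
  rcases Fs.eq_empty_or_nonempty with rfl | hFs
  · obtain rfl : S = ∅ := Finset.eq_empty_of_forall_notMem fun H hH ↦ by
      obtain ⟨v, hv⟩ := h.nonempty hH
      simpa using h.cover H hH v hv
    have hbot : facetIdealOf K (∅ : Finset (Finset V)) = ⊥ := by
      simp [facetIdealOf_eq_span_image]
    refine ⟨(Finset.univ.toList.map singleton).map (xMon K), by simp,
      by simp [xMon, X_mem_idealOfVars], ?_⟩
    refine ((Submodule.quotEquivOfEqBot _ hbot).isWeaklyRegular_congr _).2
      (isWeaklyRegular_map_xMon K ?_)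
    rw [List.pairwise_map]
    exact (Finset.nodup_toList _).imp Finset.disjoint_singleton.2
  · obtain ⟨root, hroot, hmem, hcard, hdeg⟩ := h.exists_root hFs
    set L := (Finset.univ.filter fun v ↦ root v ≠ v).toList.insertionSort
      fun v' v ↦ facetDegree S v ≤ facetDegree S v'
    have hL : L.Perm (Finset.univ.filter fun v ↦ root v ≠ v).toList := List.perm_insertionSort _ _
    have hsorted : L.Pairwise fun v' v ↦ facetDegree S v ≤ facetDegree S v' :=
      List.pairwise_insertionSort _ _
    refine ⟨L.map fun v ↦ (X v - X (root v) : MvPolynomial V K), ?_, ?_,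
      isWeaklyRegular_map_X_sub_X K hroot hmem (hL.nodup_iff.2 (Finset.nodup_toList _))
      (fun v hv ↦ ?_) (hsorted.imp fun hle heq ↦ hdeg _ _ heq hle)⟩
    · rw [List.length_map, hL.length_eq, Finset.length_toList, ← hcard, add_comm]
      exact Finset.card_filter_add_card_filter_not _
    · simp only [List.forall_mem_map]
      exact fun v _ ↦ sub_mem (X_mem_idealOfVars v) (X_mem_idealOfVars (root v))
    · simpa using hL.subset hv

theorem isCMQuot (h : IsChainGrafting S Fs) : IsCMQuot K (facetIdealOf K S) := by
  obtain ⟨rs, hlength, hmem, hweak⟩ := h.exists_isWeaklyRegular K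
  refine isCMQuot_of_isRegular K hmem (isRegular_quotient_of_isWeaklyRegular hweak
    (idealOfVars_ne_top V K) (facetIdealOf_le_idealOfVars K h.empty_notMem) hmem) ?_
  rw [← ENat.WithBot.add_le_add_natCast_right_iff (c := Fs.card)]
  exact_mod_cast hlength ▸
    ringKrullDim_quotient_facetIdealOf_add_card_le K h.subset h.pairwiseDisjoint

end IsChainGrafting

theorem stmt12_general (Δ : SimplicialComplexOn V) (hΔ : IsCMForestFacets Δ.facets)
    (A : Finset V) (hA : ∀ H ∈ Δ.facets, ¬ H ⊆ A) :
    IsCMForestFacets (contraction Δ.facets A) ∧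
      IsCMQuot K (facetIdealOf K (contraction Δ.facets A)) := by
  obtain ⟨Fs, hFs⟩ := hΔ.2.exists_isChainGrafting Δ.empty_notMem Δ.isAntichain
  have hcontr := hFs.contraction hA
  exact ⟨⟨hΔ.1.contraction, hcontr.isGrafted⟩, hcontr.isCMQuot K⟩

theorem stmt12 (Δ : SimplicialComplexOn V)
    (hcov : ∀ v : V, ∃ F ∈ Δ.facets, v ∈ F)
    (Fs Gs : Finset (Finset V))
    (hforest : HasLeafProp Δ.facets)
    (hdecomp : IsGraftingDecomp Δ.facets Fs Gs)
    (F : Finset V) (hFmem : F ∈ Fs)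
    (hmeet : ∃ G ∈ Gs, (F ∩ G).Nonempty)
    (A : Finset V)
    (hA : ∀ a ∈ A, ∀ G ∈ Gs, (F ∩ G).Nonempty → a ∈ F ∩ G) :
    IsCMForestFacets (contraction Δ.facets A) ∧
      IsCMQuot K (facetIdealOf K (contraction Δ.facets A)) := by
  obtain ⟨G, hG, hFG⟩ := hmeet
  obtain ⟨hunion, hdisj, -⟩ := id hdecomp
  exact stmt12_general K Δ ⟨hforest, hdecomp.isGrafted⟩ A fun H ↦
    not_subset_of_subset_inter Δ.isAntichain (hunion ▸ Finset.mem_union_left _ hFmem)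
      (hunion ▸ Finset.mem_union_right _ hG)
      (ne_of_mem_of_not_mem hFmem (Finset.disjoint_right.1 hdisj hG)) fun a ha ↦ hA a ha G hG hFG

end Statements
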